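/- Let H be a finite-dimensional complex vector space with a real structure c, carrying a Hodge structure of weight k and a horizontal (sl₂)²-action defined over ℝ. Then every invariant subspace U ⊆ H admits an invariant complement: there exists an invariant subspace U' with H = U ⊕ U'. -/

import Mathlib

/-- A Hodge structure of weight `k` on a finite-dimensional complex vector space `H`
with real structure `c`, together with a horizontal `(𝔰𝔩₂)²`-action defined over `ℝ`. -/
structure HorizontalSL2Data (H : Type*) [AddCommGroup H] [Module ℂ H] where
  /-- The real structure: a conjugate-linear involution. -/
  c : H →ₛₗ[starRingEnd ℂ] H
  c_invol : ∀ x, c (c x) = x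
  /-- The weight. -/
  k : ℤ
  /-- The Hodge pieces `H^{p,q}` with `q = k - p`, indexed by `p`. -/
  Hpq : ℤ → Submodule ℂ H
  internal : DirectSum.IsInternal Hpq
  conj_mem : ∀ p : ℤ, ∀ x ∈ Hpq p, c x ∈ Hpq (k - p)
  /-- The raising operators `N_j⁺`. -/
  Np : Fin 2 → Module.End ℂ H
  /-- The lowering operators `N_j⁻`. -/
  Nm : Fin 2 → Module.End ℂ H
  /-- The semisimple operators `Y_j`. -/
  Y : Fin 2 → Module.End ℂ H
  c_comm_Np : ∀ (j : Fin 2) (x : H), c (Np j x) = Np j (c x)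
  c_comm_Nm : ∀ (j : Fin 2) (x : H), c (Nm j x) = Nm j (c x)
  c_comm_Y : ∀ (j : Fin 2) (x : H), c (Y j x) = Y j (c x)
  sl2_YNp : ∀ j, Y j * Np j - Np j * Y j = (2 : ℂ) • Np j
  sl2_YNm : ∀ j, Y j * Nm j - Nm j * Y j = (-2 : ℂ) • Nm j
  sl2_NpNm : ∀ j, Np j * Nm j - Nm j * Np j = Y j
  factors_commute : ∀ j j' : Fin 2, j ≠ j' →
    Commute (Np j) (Np j') ∧ Commute (Np j) (Nm j') ∧ Commute (Np j) (Y j') ∧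
    Commute (Nm j) (Np j') ∧ Commute (Nm j) (Nm j') ∧ Commute (Nm j) (Y j') ∧
    Commute (Y j) (Np j') ∧ Commute (Y j) (Nm j') ∧ Commute (Y j) (Y j')
  horizontal_lower : ∀ (j : Fin 2) (p : ℤ), ∀ x ∈ Hpq p,
    (Np j + Nm j + Complex.I • Y j) x ∈ Hpq (p - 1)
  horizontal_raise : ∀ (j : Fin 2) (p : ℤ), ∀ x ∈ Hpq p,
    (Np j + Nm j - Complex.I • Y j) x ∈ Hpq (p + 1)
  horizontal_zero : ∀ (j : Fin 2) (p : ℤ), ∀ x ∈ Hpq p,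
    (Np j - Nm j) x ∈ Hpq p

/-- A subspace `U ⊆ H` is invariant if it is stable under the real structure and under
all six operators, and is graded by the Hodge decomposition. -/
def HorizontalSL2Data.IsInvariant {H : Type*} [AddCommGroup H] [Module ℂ H]
    (D : HorizontalSL2Data H) (U : Submodule ℂ H) : Prop :=
  (∀ x ∈ U, D.c x ∈ U) ∧
  (∀ j : Fin 2, ∀ x ∈ U, D.Np j x ∈ U) ∧
  (∀ j : Fin 2, ∀ x ∈ U, D.Nm j x ∈ U) ∧
  (∀ j : Fin 2, ∀ x ∈ U, D.Y j x ∈ U) ∧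
  U = ⨆ p : ℤ, U ⊓ D.Hpq p

/-- An invariant subspace is irreducible if it is nonzero and contains no invariant
subspaces other than `0` and itself. -/
def HorizontalSL2Data.IsIrreducible {H : Type*} [AddCommGroup H] [Module ℂ H]
    (D : HorizontalSL2Data H) (U : Submodule ℂ H) : Prop :=
  U ≠ ⊥ ∧ D.IsInvariant U ∧
  ∀ U' : Submodule ℂ H, D.IsInvariant U' → U' ≤ U → U' = ⊥ ∨ U' = U

/-!
An invariant complement of `U` is the kernel of a projection onto `U` that commutes with the whole
structure, and such a projection is obtained from an arbitrary one in three corrections.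

* *The `(𝔰𝔩₂)²`-action* (Weyl's argument). A finite-dimensional representation of a power of `𝔰𝔩₂`
  is the sum of its invariants and of the images of the operators `e` and `f`. Apply this to the
  commutator action on the span of a projection `π` onto `U` and of `Hom(H/U, U)`. Commutators of
  `π` with operators preserving `U` lie in `Hom(H/U, U)`, so the invariant component of `π` differs
  from `π` by an element of `Hom(H/U, U)` and is therefore again a projection onto `U`.
* *The real structure.* Average over `c`.
* *The Hodge structure.* Take the part of degree zero. It still commutes with `c`, which maps graded
  pieces to graded pieces, and with `N⁺ + N⁻ ± iY` and `N⁺ - N⁻`, which are homogeneous and span the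
  same space as `N⁺`, `N⁻` and `Y`.
-/

open Module

attribute [local instance] LieRing.ofAssociativeRing

/-- The commutation relations of the standard basis of `𝔰𝔩₂`. Unlike in `IsSl2Triple`, the triple
may be zero, so that the relations pass to subrepresentations. -/
structure Sl2Relations {L : Type*} [LieRing L] (h e f : L) : Prop where
  lie_e_f : ⁅e, f⁆ = h
  lie_h_e : ⁅h, e⁆ = 2 • e
  lie_h_f : ⁅h, f⁆ = -(2 • f)

theorem isNilpotent_of_lie_eq_smul {K A : Type*} [Field K] [CharZero K] [Ring A] [Algebra K A]
    [FiniteDimensional K A] {h e : A} {a : K} (ha : a ≠ 0) (he : ⁅h, e⁆ = a • e) :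
    IsNilpotent e := by
  by_contra hnil
  have lie_pow (n : ℕ) : ⁅h, e ^ n⁆ = (n * a) • e ^ n := by
    induction n with
    | zero => simp [Ring.lie_def]
    | succ n ih =>
      calc ⁅h, e ^ (n + 1)⁆ = ⁅h, e ^ n⁆ * e + e ^ n * ⁅h, e⁆ := by
            simp only [Ring.lie_def, pow_succ]; noncomm_ring
        _ = ((n + 1 : ℕ) * a) • e ^ (n + 1) := by
            rw [ih, he, smul_mul_assoc, mul_smul_comm, ← pow_succ, ← add_smul]
            push_cast
            ring_nf
  have eigenvalue (n : ℕ) : (LieAlgebra.ad K A h).HasEigenvalue (n * a) :=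
    End.hasEigenvalue_of_hasEigenvector
      ⟨End.mem_eigenspace_iff.2 (lie_pow n), fun h0 ↦ hnil ⟨n, h0⟩⟩
  have injective : Function.Injective fun n : ℕ ↦ (n : K) * a :=
    (mul_left_injective₀ ha).comp Nat.cast_injective
  exact Set.infinite_of_injective_forall_mem injective eigenvalue (End.finite_hasEigenvalue _)

namespace Sl2Relations

theorem symm {L : Type*} [LieRing L] {h e f : L} (t : Sl2Relations h e f) :
    Sl2Relations (-h) f e where
  lie_e_f := by rw [← lie_skew, t.lie_e_f]
  lie_h_e := by rw [neg_lie, t.lie_h_f, neg_neg]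
  lie_h_f := by rw [neg_lie, t.lie_h_e]

theorem map {R L L' : Type*} [CommRing R] [LieRing L] [LieAlgebra R L] [LieRing L']
    [LieAlgebra R L'] {h e f : L} (t : Sl2Relations h e f) (φ : L →ₗ⁅R⁆ L') :
    Sl2Relations (φ h) (φ e) (φ f) where
  lie_e_f := by rw [← LieHom.map_lie, t.lie_e_f]
  lie_h_e := by rw [← LieHom.map_lie, t.lie_h_e, map_nsmul]
  lie_h_f := by rw [← LieHom.map_lie, t.lie_h_f, map_neg, map_nsmul]

section Module

variable {R M : Type*} [CommRing R] [AddCommGroup M] [Module R M] {h e f : End R M}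

theorem e_f_apply (t : Sl2Relations h e f) (x : M) : e (f x) = f (e x) + h x := by
  simp [← t.lie_e_f, Ring.lie_def]

theorem h_e_apply (t : Sl2Relations h e f) (x : M) : h (e x) = e (h x) + (2 : R) • e x := by
  have := LinearMap.congr_fun t.lie_h_e x
  simp only [Ring.lie_def, LinearMap.sub_apply, End.mul_apply, LinearMap.smul_apply] at this
  rw [← Nat.cast_smul_eq_nsmul R, sub_eq_iff_eq_add'] at this
  exact_mod_cast this

theorem h_f_apply (t : Sl2Relations h e f) (x : M) : h (f x) = f (h x) - (2 : R) • f x := by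
  have := t.symm.h_e_apply x
  simp only [LinearMap.neg_apply, map_neg] at this
  rw [neg_eq_iff_eq_neg.1 this]
  abel

theorem h_mem_invtSubmodule (t : Sl2Relations h e f) {p : Submodule R M}
    (he : p ∈ e.invtSubmodule) (hf : p ∈ f.invtSubmodule) : p ∈ h.invtSubmodule := fun x hx ↦ by
  have : h x = e (f x) - f (e x) := by rw [t.e_f_apply, add_sub_cancel_left]
  rw [Submodule.mem_comap, this]
  exact p.sub_mem (he (hf hx)) (hf (he hx))

theorem restrict (t : Sl2Relations h e f) {p : Submodule R M} (hh : p ∈ h.invtSubmodule)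
    (he : p ∈ e.invtSubmodule) (hf : p ∈ f.invtSubmodule) :
    Sl2Relations (LinearMap.restrict h hh) (LinearMap.restrict e he)
      (LinearMap.restrict f hf) where
  lie_e_f := LinearMap.ext fun x ↦ Subtype.ext (LinearMap.congr_fun t.lie_e_f (x : M))
  lie_h_e := LinearMap.ext fun x ↦ Subtype.ext (LinearMap.congr_fun t.lie_h_e (x : M))
  lie_h_f := LinearMap.ext fun x ↦ Subtype.ext (LinearMap.congr_fun t.lie_h_f (x : M))

theorem f_e_pow_succ_apply (t : Sl2Relations h e f) (n : ℕ) (x : M) :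
    f ((e ^ (n + 1)) x) = (e ^ (n + 1)) (f x) - (n + 1 : R) • (e ^ n) (h x + (n : R) • x) := by
  induction n generalizing x with
  | zero => simp [t.e_f_apply]
  | succ n ih =>
    rw [pow_succ, End.mul_apply, ih (e x), End.mul_apply, t.e_f_apply, t.h_e_apply, pow_succ e n]
    simp only [End.mul_apply, map_add, map_smul]
    push_cast
    module

end Module

section FiniteDimensional

variable {K V : Type*} [Field K] [CharZero K] [AddCommGroup V] [Module K V] [FiniteDimensional K V]
  {h e f : End K V}

theorem isNilpotent_e (t : Sl2Relations h e f) : IsNilpotent e :=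
  isNilpotent_of_lie_eq_smul (two_ne_zero (α := K)) <| by
    rw [t.lie_h_e, ← Nat.cast_smul_eq_nsmul K, Nat.cast_ofNat]

theorem exists_nat_of_e_eq_zero (t : Sl2Relations h e f) {x : V} {μ : K} (hx : x ≠ 0)
    (he : e x = 0) (hh : h x = μ • x) : ∃ n : ℕ, μ = n := by
  by_cases h_zero : h = 0
  · refine ⟨0, ?_⟩
    simpa [h_zero, hx, eq_comm] using hh
  · have triple : IsSl2Triple h e f := ⟨h_zero, t.lie_e_f, t.lie_h_e, t.lie_h_f⟩
    have primitive : triple.HasPrimitiveVectorWith x μ := ⟨hx, hh, he⟩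
    exact primitive.exists_nat

theorem f_eq_zero_of_e_f_eq_zero (t : Sl2Relations h e f) {x : V} (hx : e (f x) = 0) :
    f x = 0 := by
  obtain ⟨n, hn⟩ := t.isNilpotent_e
  replace hn : (e ^ n) x = 0 := by rw [hn, LinearMap.zero_apply]
  induction n generalizing x with
  | zero =>
    rw [pow_zero, End.one_apply] at hn
    rw [hn, map_zero]
  | succ n ih =>
    have pow_shift : (e ^ n) (h x + (n : K) • x) = 0 := by
      have := t.f_e_pow_succ_apply n x
      rw [hn, pow_succ, End.mul_apply, hx, map_zero, map_zero, zero_sub, zero_eq_neg] at this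
      exact (smul_eq_zero.1 this).resolve_left n.cast_add_one_ne_zero
    have f_shift : f (h x + (n : K) • x) = h (f x) + (n + 2 : K) • f x := by
      rw [map_add, map_smul, t.h_f_apply]
      module
    have e_h : e (h (f x)) = 0 := by
      have := t.h_e_apply (f x)
      rwa [hx, map_zero, smul_zero, add_zero, eq_comm] at this
    have weight : h (f x) = (-(n + 2) : K) • f x := by
      have := ih (x := h x + (n : K) • x) (by rw [f_shift, map_add, map_smul, e_h, hx]; simp)
        pow_shift
      rw [neg_smul, ← add_eq_zero_iff_eq_neg, ← f_shift, this]
    -- Otherwise `f x` would be a primitive vector of the negative weight `-(n + 2)`.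
    by_contra hfx
    obtain ⟨m, hm⟩ := t.exists_nat_of_e_eq_zero hfx hx weight
    have : ((m + n + 2 : ℕ) : K) = 0 := by
      push_cast
      rw [← hm]
      ring
    exact absurd (Nat.cast_eq_zero.1 this) (by omega)

theorem disjoint_ker_range (t : Sl2Relations h e f) : Disjoint e.ker f.range := by
  rw [Submodule.disjoint_def]
  rintro _ hx ⟨x, rfl⟩
  exact t.f_eq_zero_of_e_f_eq_zero hx

theorem ker_sup_range_eq_top (t : Sl2Relations h e f) : e.ker ⊔ f.range = ⊤ := by
  -- The two disjoint pairs `ker e, range f` and `ker f, range e` have total dimension `2 dim V`.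
  refine Submodule.eq_top_of_disjoint _ _ ?_ t.disjoint_ker_range
  have := Submodule.finrank_add_finrank_le_of_disjoint t.symm.disjoint_ker_range
  have := e.finrank_range_add_finrank_ker
  have := f.finrank_range_add_finrank_ker
  omega

theorem f_eq_zero_of_e_eq_zero_of_h_eq_zero (t : Sl2Relations h e f) {x : V} (he : e x = 0)
    (hh : h x = 0) : f x = 0 :=
  t.f_eq_zero_of_e_f_eq_zero <| by rw [t.e_f_apply, he, hh, map_zero, add_zero]

theorem ker_le_ker_inf_ker_sup_range (t : Sl2Relations h e f) :
    e.ker ≤ e.ker ⊓ f.ker ⊔ e.range := by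
  have ker_invariant : e.ker ∈ h.invtSubmodule := fun x (hx : e x = 0) ↦ by
    have := t.h_e_apply x
    rwa [hx, map_zero, smul_zero, add_zero, eq_comm] at this
  have h_eq (x : e.ker) : h x = e (f x) := by
    rw [t.e_f_apply, x.2, map_zero, zero_add]
  set hker : End K e.ker := LinearMap.restrict h ker_invariant
  have disjoint : Disjoint hker.ker hker.range := by
    rw [Submodule.disjoint_def]
    rintro _ hx ⟨x, rfl⟩
    have f_zero : f (h x) = 0 := t.f_eq_zero_of_e_eq_zero_of_h_eq_zero (hker x).2
      (congrArg Subtype.val (LinearMap.mem_ker.1 hx))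
    rw [h_eq] at f_zero
    exact Subtype.ext ((h_eq x).trans (t.symm.f_eq_zero_of_e_f_eq_zero f_zero))
  have sup_eq_top : hker.ker ⊔ hker.range = ⊤ :=
    Submodule.eq_top_of_disjoint _ _ (by rw [add_comm, hker.finrank_range_add_finrank_ker]) disjoint
  intro x hx
  obtain ⟨y, hy, _, ⟨z, rfl⟩, hyz⟩ :=
    Submodule.mem_sup.1 (sup_eq_top ▸ Submodule.mem_top : (⟨x, hx⟩ : e.ker) ∈ _)
  have hy : h y = 0 := congrArg Subtype.val (LinearMap.mem_ker.1 hy)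
  refine Submodule.mem_sup.2 ⟨y, ⟨y.2, t.f_eq_zero_of_e_eq_zero_of_h_eq_zero y.2 hy⟩, h z,
    ⟨f z, (h_eq z).symm⟩, congrArg Subtype.val hyz⟩

theorem ker_inf_ker_sup_range_sup_range_eq_top (t : Sl2Relations h e f) :
    e.ker ⊓ f.ker ⊔ (e.range ⊔ f.range) = ⊤ := by
  rw [← sup_assoc, eq_top_iff, ← t.ker_sup_range_eq_top]
  exact sup_le_sup_right t.ker_le_ker_inf_ker_sup_range _

theorem le_inf_ker_inf_ker_sup_map_sup_map (t : Sl2Relations h e f) {p : Submodule K V}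
    (he : p ∈ e.invtSubmodule) (hf : p ∈ f.invtSubmodule) :
    p ≤ p ⊓ (e.ker ⊓ f.ker) ⊔ (p.map e ⊔ p.map f) := by
  have top :=
    (t.restrict (t.h_mem_invtSubmodule he hf) he hf).ker_inf_ker_sup_range_sup_range_eq_top
  intro x hx
  obtain ⟨y, ⟨hey, hfy⟩, _, hr, hyx⟩ :=
    Submodule.mem_sup.1 (top ▸ Submodule.mem_top : (⟨x, hx⟩ : p) ∈ _)
  obtain ⟨_, ⟨u, rfl⟩, _, ⟨v, rfl⟩, rfl⟩ := Submodule.mem_sup.1 hr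
  exact Submodule.mem_sup.2 ⟨y, ⟨y.2, congrArg Subtype.val hey, congrArg Subtype.val hfy⟩, _,
    Submodule.add_mem_sup (Submodule.mem_map_of_mem u.2) (Submodule.mem_map_of_mem v.2),
    congrArg Subtype.val hyx⟩

end FiniteDimensional

end Sl2Relations

section Invariant

variable {R M : Type*} [Ring R] [AddCommGroup M] [Module R M]

theorem iInf_mem_invtSubmodule {ι : Sort*} {a : End R M} {p : ι → Submodule R M}
    (hp : ∀ i, p i ∈ a.invtSubmodule) : ⨅ i, p i ∈ a.invtSubmodule := by
  rw [End.mem_invtSubmodule, Submodule.comap_iInf]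
  exact iInf_mono hp

theorem ker_mem_invtSubmodule_of_lie_eq_zero {a b : End R M} (hab : ⁅a, b⁆ = 0) :
    a.ker ∈ b.invtSubmodule := fun x hx ↦ by
  rw [LinearMap.mem_ker] at hx
  rw [Submodule.mem_comap, LinearMap.mem_ker, ← End.mul_apply, (commute_iff_lie_eq.2 hab).eq,
    End.mul_apply, hx, map_zero]

end Invariant

/-- Pairwise commuting `𝔰𝔩₂`-triples indexed by `ι`: an action of the Lie algebra `(𝔰𝔩₂)^ι`. -/
structure CommutingSl2Relations {ι L : Type*} [LieRing L] (h e f : ι → L) : Prop where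
  sl2Relations : ∀ i, Sl2Relations (h i) (e i) (f i)
  lie_e_e : ∀ ⦃i j⦄, i ≠ j → ⁅e i, e j⁆ = 0
  lie_e_f : ∀ ⦃i j⦄, i ≠ j → ⁅e i, f j⁆ = 0
  lie_f_f : ∀ ⦃i j⦄, i ≠ j → ⁅f i, f j⁆ = 0

namespace CommutingSl2Relations

theorem map {ι R L L' : Type*} [CommRing R] [LieRing L] [LieAlgebra R L] [LieRing L']
    [LieAlgebra R L'] {h e f : ι → L} (t : CommutingSl2Relations h e f) (φ : L →ₗ⁅R⁆ L') :
    CommutingSl2Relations (fun i ↦ φ (h i)) (fun i ↦ φ (e i)) (fun i ↦ φ (f i)) where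
  sl2Relations i := (t.sl2Relations i).map φ
  lie_e_e i j hij := by rw [← LieHom.map_lie, t.lie_e_e hij, map_zero]
  lie_e_f i j hij := by rw [← LieHom.map_lie, t.lie_e_f hij, map_zero]
  lie_f_f i j hij := by rw [← LieHom.map_lie, t.lie_f_f hij, map_zero]

theorem iInf_ker_inf_ker_mem_invtSubmodule {ι R M : Type*} [CommRing R] [AddCommGroup M]
    [Module R M] {h e f : ι → End R M} (t : CommutingSl2Relations h e f) {s : Set ι} {i : ι}
    (hi : i ∉ s) :
    ⨅ j ∈ s, (e j).ker ⊓ (f j).ker ∈ (e i).invtSubmodule ⊓ (f i).invtSubmodule := by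
  have ne {j : ι} (hj : j ∈ s) : j ≠ i := ne_of_mem_of_not_mem hj hi
  have lie_f_e {j : ι} (hj : j ∈ s) : ⁅f j, e i⁆ = 0 :=
    (commute_iff_lie_eq.2 (t.lie_e_f (ne hj).symm)).symm.lie_eq
  exact ⟨iInf_mem_invtSubmodule fun j ↦ iInf_mem_invtSubmodule fun hj ↦ Sublattice.inf_mem
      (ker_mem_invtSubmodule_of_lie_eq_zero (t.lie_e_e (ne hj)))
      (ker_mem_invtSubmodule_of_lie_eq_zero (lie_f_e hj)),
    iInf_mem_invtSubmodule fun j ↦ iInf_mem_invtSubmodule fun hj ↦ Sublattice.inf_mem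
      (ker_mem_invtSubmodule_of_lie_eq_zero (t.lie_e_f (ne hj)))
      (ker_mem_invtSubmodule_of_lie_eq_zero (t.lie_f_f (ne hj)))⟩

variable {ι K V : Type*} [Field K] [CharZero K] [AddCommGroup V] [Module K V]
  [FiniteDimensional K V] {h e f : ι → End K V}

theorem le_inf_iInf_ker_sup_iSup_map (t : CommutingSl2Relations h e f) {p : Submodule K V}
    (hp : ∀ i, p ∈ (e i).invtSubmodule ⊓ (f i).invtSubmodule) (s : Finset ι) :
    p ≤ p ⊓ (⨅ i ∈ s, (e i).ker ⊓ (f i).ker) ⊔ ⨆ i ∈ s, p.map (e i) ⊔ p.map (f i) := by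
  classical
  induction s using Finset.induction_on with
  | empty => simp
  | insert i s hi ih =>
    set q := p ⊓ ⨅ j ∈ s, (e j).ker ⊓ (f j).ker
    have hq : q ∈ (e i).invtSubmodule ⊓ (f i).invtSubmodule :=
      Sublattice.inf_mem (hp i) (t.iInf_ker_inf_ker_mem_invtSubmodule (s := s) hi)
    have q_le : q ≤ p := inf_le_left
    have split := (t.sl2Relations i).le_inf_ker_inf_ker_sup_map_sup_map hq.1 hq.2
    rw [Finset.iInf_insert, Finset.iSup_insert, inf_comm ((e i).ker ⊓ (f i).ker), ← inf_assoc,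
      ← sup_assoc]
    calc p ≤ q ⊔ _ := ih
      _ ≤ _ := sup_le_sup_right
        (split.trans (sup_le_sup_left (sup_le_sup (Submodule.map_mono q_le)
          (Submodule.map_mono q_le)) _)) _

end CommutingSl2Relations

section Projection

variable {R M : Type*} [CommRing R] [AddCommGroup M] [Module R M] {U : Submodule R M}

/-- `Hom(M/U, U)`, realised as the endomorphisms of `M` that have image in `U` and vanish on `U`.
The difference of two projections onto `U` lies here. -/
def homQuotient (U : Submodule R M) : Submodule R (End R M) :=
  Submodule.compatibleMaps ⊤ U ⊓ Submodule.compatibleMaps U ⊥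

theorem mem_homQuotient {φ : End R M} :
    φ ∈ homQuotient U ↔ (∀ x, φ x ∈ U) ∧ ∀ x ∈ U, φ x = 0 :=
  and_congr_left' ⟨fun h _ ↦ h trivial, fun h x _ ↦ h x⟩

theorem lie_mem_homQuotient {a φ : End R M} (ha : U ∈ a.invtSubmodule)
    (hφ : φ ∈ homQuotient U) : ⁅a, φ⁆ ∈ homQuotient U := by
  rw [mem_homQuotient] at hφ ⊢
  refine ⟨fun x ↦ U.sub_mem (ha (hφ.1 x)) (hφ.1 (a x)), fun x hx ↦ ?_⟩
  rw [Ring.lie_def, LinearMap.sub_apply, End.mul_apply, End.mul_apply, hφ.2 x hx, map_zero,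
    hφ.2 _ (ha hx), sub_zero]

theorem lie_isProj_mem_homQuotient {a π : End R M} (ha : U ∈ a.invtSubmodule)
    (hπ : LinearMap.IsProj U π) : ⁅a, π⁆ ∈ homQuotient U := by
  refine mem_homQuotient.2
    ⟨fun x ↦ U.sub_mem (ha (hπ.map_mem x)) (hπ.map_mem (a x)), fun x hx ↦ ?_⟩
  rw [Ring.lie_def, LinearMap.sub_apply, End.mul_apply, End.mul_apply, hπ.map_id x hx,
    hπ.map_id _ (ha hx), sub_self]

theorem isProj_of_sub_mem_homQuotient {π ψ : End R M} (hπ : LinearMap.IsProj U π)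
    (h : π - ψ ∈ homQuotient U) : LinearMap.IsProj U ψ := by
  rw [mem_homQuotient] at h
  refine ⟨fun x ↦ (U.sub_mem_iff_right (hπ.map_mem x)).1 (h.1 x), fun x hx ↦ ?_⟩
  rw [← sub_eq_zero.1 (h.2 x hx), hπ.map_id x hx]

end Projection

theorem CommutingSl2Relations.exists_isProj_commute {ι K V : Type*} [Finite ι] [Field K]
    [CharZero K] [AddCommGroup V] [Module K V] [FiniteDimensional K V] {h e f : ι → End K V}
    (t : CommutingSl2Relations h e f) {U : Submodule K V}
    (hU : ∀ i, U ∈ (e i).invtSubmodule ⊓ (f i).invtSubmodule) :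
    ∃ π : End K V, LinearMap.IsProj U π ∧ ∀ i, Commute (e i) π ∧ Commute (f i) π := by
  cases nonempty_fintype ι
  obtain ⟨U', hUU'⟩ := U.exists_isCompl
  let π₀ : End K V := U.projection U' hUU'
  have hπ₀ : LinearMap.IsProj U π₀ :=
    ⟨Submodule.projection_apply_mem hUU', fun _ hx ↦
      Submodule.projection_apply_of_mem_left hUU' hx⟩
  let Q := homQuotient U ⊔ K ∙ π₀
  have ad_Q {a : End K V} (ha : U ∈ a.invtSubmodule) :
      Q.map (LieAlgebra.ad K (End K V) a) ≤ homQuotient U := by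
    rw [Submodule.map_sup, Submodule.map_span, Set.image_singleton]
    exact sup_le (Submodule.map_le_iff_le_comap.2 fun _ ↦ lie_mem_homQuotient ha)
      ((Submodule.span_singleton_le_iff_mem _ _).2 (lie_isProj_mem_homQuotient ha hπ₀))
  have invariant {a : End K V} (ha : U ∈ a.invtSubmodule) :
      Q ∈ (LieAlgebra.ad K (End K V) a).invtSubmodule :=
    Submodule.map_le_iff_le_comap.1 ((ad_Q ha).trans le_sup_left)
  have decomposition := (t.map (LieAlgebra.ad K (End K V))).le_inf_iInf_ker_sup_iSup_map
    (fun i ↦ ⟨invariant (hU i).1, invariant (hU i).2⟩) Finset.univ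
  obtain ⟨ψ, hψ, φ, hφ, hψφ⟩ := Submodule.mem_sup.1
    (decomposition (Submodule.mem_sup_right (Submodule.mem_span_singleton_self π₀)))
  have φ_mem : φ ∈ homQuotient U :=
    iSup₂_le (fun i _ ↦ sup_le (ad_Q (hU i).1) (ad_Q (hU i).2)) hφ
  refine ⟨ψ, isProj_of_sub_mem_homQuotient hπ₀ (by rwa [← hψφ, add_sub_cancel_left]), fun i ↦ ?_⟩
  have ψ_invariant := (Submodule.mem_iInf _).1 ((Submodule.mem_iInf _).1 hψ.2 i) (Finset.mem_univ i)
  exact ⟨commute_iff_lie_eq.2 ψ_invariant.1, commute_iff_lie_eq.2 ψ_invariant.2⟩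

section RealStructure

variable {K V : Type*} [Field K] [AddCommGroup V] [Module K V] {σ : K →+* K} [RingHomInvPair σ σ]
  {c : V →ₛₗ[σ] V} {π : End K V}

/-- The average of `π` and its conjugate by a semilinear involution `c`: the part of `π` that is
defined over the real structure `c`. -/
def conjAverage (c : V →ₛₗ[σ] V) (π : End K V) : End K V :=
  (2⁻¹ : K) • (π + c.comp (π.comp c))

theorem conjAverage_apply (x : V) : conjAverage c π x = (2⁻¹ : K) • (π x + c (π (c x))) := rfl

theorem conjAverage_conj (hc : ∀ x, c (c x) = x) (x : V) :
    conjAverage c π (c x) = c (conjAverage c π x) := by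
  simp only [conjAverage_apply, hc, map_smulₛₗ, map_inv₀, map_ofNat, map_add, add_comm]

theorem commute_conjAverage {T : End K V} (hT : ∀ x, c (T x) = T (c x)) (hπ : Commute T π) :
    Commute T (conjAverage c π) := by
  have hπ (x : V) : T (π x) = π (T x) := LinearMap.congr_fun hπ.eq x
  refine LinearMap.ext fun x ↦ ?_
  simp only [End.mul_apply, conjAverage_apply, map_smul, map_add, ← hT, hπ]

theorem isProj_conjAverage [NeZero (2 : K)] {U : Submodule K V} (hc : ∀ x, c (c x) = x)
    (hU : ∀ x ∈ U, c x ∈ U) (hπ : LinearMap.IsProj U π) :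
    LinearMap.IsProj U (conjAverage c π) where
  map_mem x := U.smul_mem _ (U.add_mem (hπ.map_mem x) (hU _ (hπ.map_mem (c x))))
  map_id x hx := by
    rw [conjAverage_apply, hπ.map_id x hx, hπ.map_id _ (hU x hx), hc, ← two_smul K x,
      inv_smul_smul₀ two_ne_zero]

end RealStructure

section Grading

open DirectSum

variable {ι R M : Type*} [DecidableEq ι] [Semiring R] [AddCommMonoid M] [Module R M]
  (ℳ : ι → Submodule R M) [Decomposition ℳ]

/-- The part of degree zero of an endomorphism of a graded module. -/
def diagonalPart (φ : End R M) : End R M :=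
  toModule R ι M (fun i ↦ (ℳ i).subtype ∘ₗ component R ι (fun i ↦ ℳ i) i ∘ₗ
    (decomposeLinearEquiv ℳ).toLinearMap ∘ₗ φ ∘ₗ (ℳ i).subtype) ∘ₗ
  (decomposeLinearEquiv ℳ).toLinearMap

variable {ℳ}

theorem diagonalPart_apply_of_mem {φ : End R M} {i : ι} {x : M} (hx : x ∈ ℳ i) :
    diagonalPart ℳ φ x = decompose ℳ (φ x) i := by
  simp only [diagonalPart, LinearMap.comp_apply, LinearEquiv.coe_coe, decomposeLinearEquiv_apply,
    decompose_of_mem ℳ hx]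
  rw [← lof_eq_of R, toModule_lof]
  rfl

theorem diagonalPart_mem {φ : End R M} {i : ι} {x : M} (hx : x ∈ ℳ i) :
    diagonalPart ℳ φ x ∈ ℳ i := by
  rw [diagonalPart_apply_of_mem hx]
  exact (decompose ℳ (φ x) i).2

section Homogeneous

variable {F : Type*} [FunLike F M M] [AddMonoidHomClass F M M] {T : F} {s : ι → ι}

theorem decompose_map_apply (hs : Function.Injective s) (hT : ∀ i, ∀ x ∈ ℳ i, T x ∈ ℳ (s i))
    (x : M) (i : ι) : (decompose ℳ (T x) (s i) : M) = T (decompose ℳ x i) := by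
  induction x using Decomposition.inductionOn ℳ with
  | zero => simp
  | @homogeneous j x =>
    by_cases hij : j = i
    · subst hij
      rw [decompose_of_mem_same ℳ (hT j x x.2), decompose_of_mem_same ℳ x.2]
    · rw [decompose_of_mem_ne ℳ (hT j x x.2) (hs.ne hij), decompose_of_mem_ne ℳ x.2 hij, map_zero]
  | add x y hx hy =>
    simp only [map_add, decompose_add, DirectSum.add_apply, Submodule.coe_add, hx, hy]

theorem diagonalPart_map (hs : Function.Injective s) (hT : ∀ i, ∀ x ∈ ℳ i, T x ∈ ℳ (s i))
    {φ : End R M} (hφ : ∀ x, φ (T x) = T (φ x)) (x : M) :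
    diagonalPart ℳ φ (T x) = T (diagonalPart ℳ φ x) := by
  induction x using Decomposition.inductionOn ℳ with
  | zero => simp
  | @homogeneous i x =>
    rw [diagonalPart_apply_of_mem (hT i x x.2), hφ, decompose_map_apply hs hT,
      diagonalPart_apply_of_mem x.2]
  | add x y hx hy => simp only [map_add, hx, hy]

end Homogeneous

theorem commute_diagonalPart {T φ : End R M} {s : ι → ι} (hs : Function.Injective s)
    (hT : ∀ i, ∀ x ∈ ℳ i, T x ∈ ℳ (s i)) (hφ : Commute T φ) : Commute T (diagonalPart ℳ φ) :=
  LinearMap.ext fun x ↦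
    (diagonalPart_map hs hT (fun y ↦ (LinearMap.congr_fun hφ.eq y).symm) x).symm

theorem isProj_diagonalPart {U : Submodule R M} (hU : SetLike.IsHomogeneous ℳ U) {π : End R M}
    (hπ : LinearMap.IsProj U π) : LinearMap.IsProj U (diagonalPart ℳ π) where
  map_mem x := by
    induction x using Decomposition.inductionOn ℳ with
    | zero => simp
    | homogeneous x =>
      rw [diagonalPart_apply_of_mem x.2]
      exact hU _ (hπ.map_mem x)
    | add x y hx hy => rw [map_add]; exact U.add_mem hx hy
  map_id x hx := by
    classical
    conv_rhs => rw [← sum_support_decompose ℳ x]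
    conv_lhs => rw [← sum_support_decompose ℳ x, map_sum]
    refine Finset.sum_congr rfl fun i _ ↦ ?_
    rw [diagonalPart_apply_of_mem (decompose ℳ x i).2, hπ.map_id _ (hU i hx),
      decompose_of_mem_same ℳ (decompose ℳ x i).2]

theorem isHomogeneous_ker {φ : End R M} (hφ : ∀ i, ∀ x ∈ ℳ i, φ x ∈ ℳ i) :
    SetLike.IsHomogeneous ℳ φ.ker := fun i x hx ↦ by
  rw [LinearMap.mem_ker] at hx ⊢
  rw [← decompose_map_apply Function.injective_id hφ, hx, decompose_zero]
  rfl

theorem isHomogeneous_iff_eq_iSup_inf {U : Submodule R M} :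
    SetLike.IsHomogeneous ℳ U ↔ U = ⨆ i, U ⊓ ℳ i := by
  classical
  refine ⟨fun hU ↦ le_antisymm (fun x hx ↦ ?_) (iSup_le fun i ↦ inf_le_left), fun hU i x hx ↦ ?_⟩
  · rw [← sum_support_decompose ℳ x]
    exact Submodule.sum_mem _ fun i _ ↦
      Submodule.mem_iSup_of_mem i ⟨hU i hx, (decompose ℳ x i).2⟩
  · rw [hU] at hx
    induction hx using Submodule.iSup_induction' with
    | mem j y hy =>
      by_cases hij : j = i
      · subst hij
        rw [decompose_of_mem_same ℳ hy.2]
        exact hy.1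
      · rw [decompose_of_mem_ne ℳ hy.2 hij]
        exact U.zero_mem
    | zero => simp
    | add y z _ _ hy hz =>
      rw [decompose_add, DirectSum.add_apply, Submodule.coe_add]
      exact U.add_mem hy hz

end Grading

namespace HorizontalSL2Data

variable {H : Type*} [AddCommGroup H] [Module ℂ H] (D : HorizontalSL2Data H)

noncomputable instance : DirectSum.Decomposition D.Hpq := D.internal.chooseDecomposition

theorem commutingSl2Relations : CommutingSl2Relations D.Y D.Np D.Nm where
  sl2Relations j :=
    { lie_e_f := D.sl2_NpNm j
      lie_h_e := by rw [Ring.lie_def, D.sl2_YNp, ofNat_smul_eq_nsmul]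
      lie_h_f := by rw [Ring.lie_def, D.sl2_YNm, neg_smul, ofNat_smul_eq_nsmul] }
  lie_e_e _ _ hij := (D.factors_commute _ _ hij).1.lie_eq
  lie_e_f _ _ hij := (D.factors_commute _ _ hij).2.1.lie_eq
  lie_f_f _ _ hij := (D.factors_commute _ _ hij).2.2.2.2.1.lie_eq

variable {D}

theorem commute_diagonalPart_Np_and_Nm {π : End ℂ H} {j : Fin 2} (hNp : Commute (D.Np j) π)
    (hNm : Commute (D.Nm j) π) :
    Commute (D.Np j) (diagonalPart D.Hpq π) ∧ Commute (D.Nm j) (diagonalPart D.Hpq π) := by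
  have hY : Commute (D.Y j) π := by
    rw [← D.sl2_NpNm]
    exact (hNp.mul_left hNm).sub_left (hNm.mul_left hNp)
  have lower := commute_diagonalPart (sub_left_injective (b := (1 : ℤ))) (D.horizontal_lower j)
    ((hNp.add_left hNm).add_left (hY.smul_left _))
  have raise := commute_diagonalPart (add_left_injective (1 : ℤ)) (D.horizontal_raise j)
    ((hNp.add_left hNm).sub_left (hY.smul_left _))
  have zero := commute_diagonalPart Function.injective_id (D.horizontal_zero j)
    (hNp.sub_left hNm)
  have Np_eq : D.Np j = (4⁻¹ : ℂ) • ((D.Np j + D.Nm j + Complex.I • D.Y j) +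
      (D.Np j + D.Nm j - Complex.I • D.Y j)) + (2⁻¹ : ℂ) • (D.Np j - D.Nm j) := by module
  have Np_commute : Commute (D.Np j) (diagonalPart D.Hpq π) := by
    rw [Np_eq]
    exact ((lower.add_left raise).smul_left _).add_left (zero.smul_left _)
  refine ⟨Np_commute, ?_⟩
  rw [← sub_sub_cancel (D.Np j) (D.Nm j)]
  exact Np_commute.sub_left zero

theorem IsInvariant.exists_isProj_commute [FiniteDimensional ℂ H] {U : Submodule ℂ H}
    (hU : D.IsInvariant U) :
    ∃ ψ : End ℂ H, LinearMap.IsProj U ψ ∧ (∀ j, Commute (D.Np j) ψ ∧ Commute (D.Nm j) ψ) ∧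
      (∀ x, ψ (D.c x) = D.c (ψ x)) ∧ ∀ p, ∀ x ∈ D.Hpq p, ψ x ∈ D.Hpq p := by
  obtain ⟨hc, hNp, hNm, -, hHpq⟩ := hU
  obtain ⟨π, isProj, comm⟩ :=
    D.commutingSl2Relations.exists_isProj_commute fun j ↦ ⟨hNp j, hNm j⟩
  refine ⟨diagonalPart D.Hpq (conjAverage D.c π),
    isProj_diagonalPart (isHomogeneous_iff_eq_iSup_inf.2 hHpq)
      (isProj_conjAverage D.c_invol hc isProj),
    fun j ↦ commute_diagonalPart_Np_and_Nm (commute_conjAverage (D.c_comm_Np j) (comm j).1)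
      (commute_conjAverage (D.c_comm_Nm j) (comm j).2),
    diagonalPart_map sub_right_injective D.conj_mem (conjAverage_conj D.c_invol),
    fun p x ↦ diagonalPart_mem⟩

theorem isInvariant_ker {ψ : End ℂ H} (hN : ∀ j, Commute (D.Np j) ψ ∧ Commute (D.Nm j) ψ)
    (hc : ∀ x, ψ (D.c x) = D.c (ψ x)) (hHpq : ∀ p, ∀ x ∈ D.Hpq p, ψ x ∈ D.Hpq p) :
    D.IsInvariant ψ.ker := by
  have hNp (j) : ψ.ker ∈ (D.Np j).invtSubmodule :=
    ker_mem_invtSubmodule_of_lie_eq_zero (hN j).1.symm.lie_eq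
  have hNm (j) : ψ.ker ∈ (D.Nm j).invtSubmodule :=
    ker_mem_invtSubmodule_of_lie_eq_zero (hN j).2.symm.lie_eq
  have hY (j) : ψ.ker ∈ (D.Y j).invtSubmodule :=
    (D.commutingSl2Relations.sl2Relations j).h_mem_invtSubmodule (hNp j) (hNm j)
  refine ⟨fun x hx ↦ ?_, hNp, hNm, hY, isHomogeneous_iff_eq_iSup_inf.1 (isHomogeneous_ker hHpq)⟩
  rw [LinearMap.mem_ker] at hx ⊢
  rw [hc, hx, map_zero]

end HorizontalSL2Data

/-- Every invariant subspace of a finite-dimensional complex vector space with real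
structure, Hodge structure of weight `k`, and horizontal `(𝔰𝔩₂)²`-action defined over
`ℝ` admits an invariant complement. -/
theorem exists_invariant_complement
    (H : Type*) [AddCommGroup H] [Module ℂ H] [FiniteDimensional ℂ H]
    (D : HorizontalSL2Data H)
    (U : Submodule ℂ H) (hU : D.IsInvariant U) :
    ∃ U' : Submodule ℂ H, D.IsInvariant U' ∧ IsCompl U U' := by
  obtain ⟨ψ, isProj, hN, hc, hHpq⟩ := hU.exists_isProj_commute
  exact ⟨ψ.ker, HorizontalSL2Data.isInvariant_ker hN hc hHpq, isProj.isCompl⟩
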